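/- There is C > 0 such that for every x ≥ 1: (i) |2·√π·x^{1/4}·e^{(2/3)·x^{3/2}}·Ai(x) − 1| ≤ C·x^{−3/2}; (ii) |2·√π·x^{−1/4}·e^{(2/3)·x^{3/2}}·Ai'(x) + 1| ≤ C·x^{−3/2}; (iii) |Ai(−x) − π^{−1/2}·x^{−1/4}·cos((2/3)·x^{3/2} − π/4)| ≤ C·x^{−7/4}; (iv) |Ai'(−x) − π^{−1/2}·x^{1/4}·sin((2/3)·x^{3/2} − π/4)| ≤ C·x^{−5/4}. -/

import Mathlib

open MeasureTheory Filter Set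

noncomputable section

/-- The Airy function `Ai(x) = (1/π)·lim_{b→∞} ∫_0^b cos(t³/3 + x·t) dt`. -/
def Ai (x : ℝ) : ℝ :=
  (1 / Real.pi) *
    limUnder Filter.atTop (fun b : ℝ => ∫ t in (0:ℝ)..b, Real.cos (t ^ 3 / 3 + x * t))

/-- The Airy kernel. -/
def KAi (x y : ℝ) : ℝ :=
  if x = y then (deriv Ai x) ^ 2 - x * (Ai x) ^ 2
  else (Ai x * deriv Ai y - deriv Ai x * Ai y) / (x - y)

/-- One-point correlation function of the Airy₂ random point field. -/
def rho (x : ℝ) : ℝ := (deriv Ai x) ^ 2 - x * (Ai x) ^ 2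

/-- Probabilists' Hermite polynomial `Ĥ_m(x) = (−1)^m e^{x²/2} (d/dx)^m e^{−x²/2}`. -/
def hermiteP (m : ℕ) (x : ℝ) : ℝ :=
  (-1 : ℝ) ^ m * Real.exp (x ^ 2 / 2) * iteratedDeriv m (fun t => Real.exp (-t ^ 2 / 2)) x

/-- Normalized oscillator function `φ_m`. -/
def osc (m : ℕ) (x : ℝ) : ℝ :=
  (2 * Real.pi) ^ (-(1:ℝ)/4) * ((m.factorial : ℝ)) ^ (-(1:ℝ)/2) *
    Real.exp (-x ^ 2 / 4) * hermiteP m x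

/-- `ψ_mⁿ(x) = n^{1/12}·φ_m(2√n + n^{−1/6}·x)`. -/
def psiUp (n m : ℕ) (x : ℝ) : ℝ :=
  (n : ℝ) ^ ((1:ℝ)/12) * osc m (2 * Real.sqrt n + (n : ℝ) ^ (-(1:ℝ)/6) * x)

/-- `ψ_n = ψ_nⁿ`. -/
def psiN (n : ℕ) : ℝ → ℝ := psiUp n n

/-- The finite-`n` Airy kernel. -/
def KAiN (n : ℕ) (x y : ℝ) : ℝ :=
  if x = y then
    (deriv (psiN n) x) ^ 2 - psiN n x * deriv (deriv (psiN n)) x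
      - (1 / (2 * (n : ℝ) ^ ((1:ℝ)/3))) * (psiN n x) ^ 2
  else
    (psiN n x * deriv (psiN n) y - deriv (psiN n) x * psiN n y) / (x - y)
      - (1 / (2 * (n : ℝ) ^ ((1:ℝ)/3))) * (psiN n x * psiN n y)

/-- `(εf)(x) = (1/2)·∫_ℝ sign(x − y)·f(y) dy`. -/
def epsF (f : ℝ → ℝ) (x : ℝ) : ℝ := (1/2) * ∫ y : ℝ, Real.sign (x - y) * f y

/-- `εψ_n`. -/
def epsPsi (n : ℕ) : ℝ → ℝ := epsF (psiN n)

/-- `J₁(x,y) = K_Ai(x,y) + (1/2)·Ai(x)·(1 − ∫_y^∞ Ai(u) du)`. -/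
def J1 (x y : ℝ) : ℝ := KAi x y + (1/2) * Ai x * (1 - ∫ u in Set.Ioi y, Ai u)

/-- Scalar part of the quaternion product of Airy₁ kernels. -/
def L1 (x y : ℝ) : ℝ :=
  J1 x y * J1 y x -
    deriv (fun v => J1 x v) y * ((∫ u in x..y, J1 u x) - (1/2) * Real.sign (y - x))

/-- `J₁ⁿ(x,y) = K_Aiⁿ(x,y) + (1/2)·ψ_{n−1}ⁿ(x)·(εψ_n)(y)`. -/
def J1N (n : ℕ) (x y : ℝ) : ℝ :=
  KAiN n x y + (1/2) * psiUp n (n - 1) x * epsPsi n y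

/-- Scalar part of the quaternion product of finite-`n` Airy₁ kernels. -/
def L1N (n : ℕ) (x y : ℝ) : ℝ :=
  J1N n x y * J1N n y x -
    deriv (fun v => J1N n x v) y * ((∫ u in x..y, J1N n u x) - (1/2) * Real.sign (y - x))

/-- `ρ̂(x) = (1/π)·√(−x)` for `x < 0`, and `0` otherwise. -/
def rhoHat (x : ℝ) : ℝ := if x < 0 then Real.sqrt (-x) / Real.pi else 0

/-- `ρ̂ⁿ(x) = (1/π)·√(−x·(1 + x/(4·n^{2/3})))` on `(−4n^{2/3}, 0)`, and `0` otherwise. -/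
def rhoHatN (n : ℕ) (x : ℝ) : ℝ :=
  if -(4 * (n : ℝ) ^ ((2:ℝ)/3)) < x ∧ x < 0 then
    Real.sqrt (-x * (1 + x / (4 * (n : ℝ) ^ ((2:ℝ)/3)))) / Real.pi
  else 0

/-- `G_{a,b,c}(x,y) = |x|^{−a}·|y|^{−b}·|x−y|^{−c}`. -/
def Gf (a b c : ℝ) (x y : ℝ) : ℝ := |x| ^ (-a) * |y| ^ (-b) * |x - y| ^ (-c)

/-- `Ĝ_{a,b,c}(x,y) = G_{a,b,c}(x,y) + G_{a,b,c}(y,x)`. -/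
def Ghat (a b c : ℝ) (x y : ℝ) : ℝ := Gf a b c x y + Gf a b c y x

/-- Soft-edge one-point correlation function of the `n`-point GUE ensemble. -/
def rhoN (n : ℕ) (x : ℝ) : ℝ :=
  (deriv (psiN n) x) ^ 2 - (x ^ 2 / (4 * (n : ℝ) ^ ((2:ℝ)/3)) + x) * (psiN n x) ^ 2

end

/-!
Deform the contour of `∫ exp (i(z³/3 + xz)) dz` to lines through the saddle points `z² = -x`: the
horizontal line through `i√x` for positive `x`, and, for negative `x`, the line of slope `1`
through `√(-x)`, of which only the part to the right of the imaginary axis is needed, since the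
integrand is real on that axis and `Ai` only involves real parts. The phase is a cubic polynomial,
so the integrand along such a line is exactly `exp (-β t² + κ t³)` up to a constant factor.
Expanding `exp (κ t³)` and integrating against the Gaussian gives the main term and, as odd moments
vanish, an error smaller by `|x|^(-3/2)`. For `Ai'` the integrand carries an additional factor `iz`.
-/

section Preliminaries

open Complex

lemma norm_exp_sub_one_le_of_re_le {w : ℂ} {s : ℝ} (hs : 0 ≤ s) (hw : w.re ≤ s) :
    ‖cexp w - 1‖ ≤ ‖w‖ * Real.exp s := by
  have h := (convex_halfSpace_re_le s).norm_image_sub_le_of_norm_hasDerivWithin_le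
    (fun z _ => (Complex.hasDerivAt_exp z).hasDerivWithinAt)
    (fun z hz => by rw [norm_exp]; exact Real.exp_le_exp.mpr hz) (x := 0) (by simpa using hs) hw
  simpa [mul_comm] using h

lemma norm_exp_sub_one_sub_id_le_of_re_le {w : ℂ} {s : ℝ} (hs : 0 ≤ s) (hw : w.re ≤ s) :
    ‖cexp w - 1 - w‖ ≤ ‖w‖ ^ 2 * Real.exp s := by
  have h := ((convex_halfSpace_re_le s).inter
      (convex_closedBall (0 : ℂ) ‖w‖)).norm_image_sub_le_of_norm_hasDerivWithin_le
    (fun z _ => ((Complex.hasDerivAt_exp z).sub (hasDerivAt_id z)).hasDerivWithinAt)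
    (fun z hz => (norm_exp_sub_one_le_of_re_le hs hz.1).trans
      (mul_le_mul_of_nonneg_right (mem_closedBall_zero_iff.mp hz.2) (Real.exp_pos s).le))
    (x := 0) (y := w) (by simpa using hs) (by simpa using hw)
  calc ‖cexp w - 1 - w‖ ≤ ‖w‖ * Real.exp s * ‖w‖ := by simpa [sub_right_comm] using h
    _ = ‖w‖ ^ 2 * Real.exp s := by ring

lemma integral_eq_zero_of_odd {E : Type*} [NormedAddCommGroup E] [NormedSpace ℝ E] {f : ℝ → E}
    (hf : f.Odd) : ∫ t, f t = 0 := by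
  have h := integral_neg_eq_self f volume
  simp_rw [hf _, integral_neg] at h
  have htwo : (2 : ℝ) • ∫ t, f t = 0 := by rw [two_smul, ← neg_eq_iff_add_eq_zero, h]
  exact (smul_eq_zero.mp htwo).resolve_left two_ne_zero

lemma norm_setIntegral_sub_integral_le {α E : Type*} [MeasurableSpace α] {μ : Measure α}
    [NormedAddCommGroup E] [NormedSpace ℝ E] {S : Set α} (hS : MeasurableSet S) {f g : α → E}
    {h : α → ℝ} (hf : IntegrableOn f S μ) (hg : Integrable g μ) (hh : Integrable h μ)
    (hin : ∀ a ∈ S, ‖f a - g a‖ ≤ h a) (hout : ∀ a ∉ S, ‖g a‖ ≤ h a) :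
    ‖∫ a in S, f a ∂μ - ∫ a, g a ∂μ‖ ≤ ∫ a, h a ∂μ := by
  rw [← integral_indicator hS, ← integral_sub (hf.integrable_indicator hS) hg]
  refine norm_integral_le_of_norm_le hh (Eventually.of_forall fun a => ?_)
  by_cases ha : a ∈ S
  · simpa only [indicator_of_mem ha] using hin a ha
  · simpa only [indicator_of_notMem ha, zero_sub, norm_neg] using hout a ha

lemma integrable_pow_mul_exp_neg_mul_sq (k : ℕ) {b : ℝ} (hb : 0 < b) :
    Integrable fun t : ℝ => t ^ k * Real.exp (-b * t ^ 2) := by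
  have hk : (-1 : ℝ) < k := by linarith [k.cast_nonneg (α := ℝ)]
  simpa only [Real.rpow_natCast] using integrable_rpow_mul_exp_neg_mul_sq hb hk

lemma integrable_abs_pow_mul_exp_neg_mul_sq (k : ℕ) {b : ℝ} (hb : 0 < b) :
    Integrable fun t : ℝ => |t| ^ k * Real.exp (-b * t ^ 2) := by
  simpa only [abs_mul, abs_pow, Real.abs_exp] using (integrable_pow_mul_exp_neg_mul_sq k hb).abs

lemma integral_abs_pow_even_mul_exp_neg_sq_mul_sq (k : ℕ) {b : ℝ} (hb : 0 < b) :
    ∫ t : ℝ, |t| ^ (2 * k) * Real.exp (-b ^ 2 * t ^ 2) =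
      (2 * k - 1 : ℕ).doubleFactorial * √Real.pi / 2 ^ k / b ^ (2 * k + 1) := by
  have hk : (-1 : ℝ) < (2 * k : ℕ) := by linarith [(2 * k).cast_nonneg (α := ℝ)]
  have hpow : (b ^ 2) ^ (-(((2 * k : ℕ) : ℝ) + 1) / 2) = (b ^ (2 * k + 1))⁻¹ := by
    rw [← Real.rpow_natCast b 2, ← Real.rpow_mul hb.le, ← Real.rpow_natCast b (2 * k + 1),
      ← Real.rpow_neg hb.le]
    congr 1
    push_cast
    ring
  have hhalf := _root_.integral_rpow_mul_exp_neg_mul_rpow two_pos hk (pow_pos hb 2)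
  have hfull := integral_comp_abs (f := fun t : ℝ => t ^ (2 * k) * Real.exp (-b ^ 2 * t ^ 2))
  simp only [Real.rpow_natCast, Real.rpow_two, sq_abs] at hhalf hfull
  have hΓ : (((2 * k : ℕ) : ℝ) + 1) / 2 = k + 1 / 2 := by push_cast; ring
  rw [hfull, hhalf, hpow, hΓ, Real.Gamma_nat_add_half]
  ring

lemma integrable_norm_affine_pow_mul_exp_neg_mul_sq (p d : ℂ) (k : ℕ) {b : ℝ} (hb : 0 < b) :
    Integrable fun t : ℝ => ‖p + t * d‖ ^ k * Real.exp (-b * t ^ 2) := by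
  have hmajorant := (((integrable_abs_pow_mul_exp_neg_mul_sq 0 hb).const_mul (‖p‖ ^ k)).add
    ((integrable_abs_pow_mul_exp_neg_mul_sq k hb).const_mul (‖d‖ ^ k))).const_mul (2 ^ (k - 1))
  refine hmajorant.mono' (by fun_prop) (Eventually.of_forall fun t => ?_)
  rw [Real.norm_of_nonneg (by positivity)]
  have hnorm : ‖p + t * d‖ ≤ ‖p‖ + |t| * ‖d‖ := by
    simpa using norm_add_le p (t * d)
  calc ‖p + t * d‖ ^ k * Real.exp (-b * t ^ 2)
      ≤ (2 ^ (k - 1) * (‖p‖ ^ k + (|t| * ‖d‖) ^ k)) * Real.exp (-b * t ^ 2) := by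
        gcongr
        exact (pow_le_pow_left₀ (norm_nonneg _) hnorm k).trans
          (add_pow_le (norm_nonneg p) (by positivity) k)
    _ = _ := by simp only [Pi.add_apply]; ring

end Preliminaries

section CubicGaussian

open Complex

/-- The integrand `exp (-β t² + κ t³)`: the exponential of a phase with a simple saddle at `t = 0`,
along a line of steepest descent. The phase of the Airy integral is a cubic polynomial, so that it
takes this form exactly. -/
noncomputable def cubicGaussian (β : ℝ) (κ : ℂ) (t : ℝ) : ℂ := cexp (-β * t ^ 2 + κ * t ^ 3)

lemma continuous_cubicGaussian (β : ℝ) (κ : ℂ) : Continuous (cubicGaussian β κ) := by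
  unfold cubicGaussian
  fun_prop

lemma cubicGaussian_eq_mul (β : ℝ) (κ : ℂ) (t : ℝ) :
    cubicGaussian β κ t = Real.exp (-β * t ^ 2) * cexp (κ * t ^ 3) := by
  rw [cubicGaussian, Complex.exp_add]
  push_cast
  rfl

variable {b β : ℝ} {κ : ℂ} {S : Set ℝ}

lemma norm_cubicGaussian_le (hre : ∀ t ∈ S, (κ * t ^ 3).re ≤ (β - b) * t ^ 2) {t : ℝ}
    (ht : t ∈ S) : ‖cubicGaussian β κ t‖ ≤ Real.exp (-b * t ^ 2) := by
  rw [cubicGaussian_eq_mul, norm_mul, norm_real, norm_exp, Real.norm_eq_abs, Real.abs_exp,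
    ← Real.exp_add]
  exact Real.exp_le_exp.mpr (by linarith [hre t ht])

lemma integrableOn_affine_pow_mul_cubicGaussian (hb : 0 < b) (hS : MeasurableSet S)
    (hre : ∀ t ∈ S, (κ * t ^ 3).re ≤ (β - b) * t ^ 2) (p d : ℂ) (k : ℕ) :
    IntegrableOn (fun t : ℝ => (p + t * d) ^ k * cubicGaussian β κ t) S := by
  have hcont := continuous_cubicGaussian β κ
  refine (integrable_norm_affine_pow_mul_exp_neg_mul_sq p d k hb).integrableOn.mono'
    (by fun_prop) ?_
  filter_upwards [ae_restrict_mem hS] with t ht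
  rw [norm_mul, norm_pow]
  gcongr
  exact norm_cubicGaussian_le hre ht

lemma integrableOn_cubicGaussian (hb : 0 < b) (hS : MeasurableSet S)
    (hre : ∀ t ∈ S, (κ * t ^ 3).re ≤ (β - b) * t ^ 2) : IntegrableOn (cubicGaussian β κ) S := by
  simpa using integrableOn_affine_pow_mul_cubicGaussian hb hS hre 0 1 0

lemma integrableOn_mul_cubicGaussian (hb : 0 < b) (hS : MeasurableSet S)
    (hre : ∀ t ∈ S, (κ * t ^ 3).re ≤ (β - b) * t ^ 2) :
    IntegrableOn (fun t : ℝ => t * cubicGaussian β κ t) S := by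
  simpa using integrableOn_affine_pow_mul_cubicGaussian hb hS hre 0 1 1

lemma integrable_pow_mul_ofReal_exp (k : ℕ) (hβ : 0 < β) :
    Integrable fun t : ℝ => (t : ℂ) ^ k * (Real.exp (-β * t ^ 2) : ℂ) := by
  simpa using (integrable_pow_mul_exp_neg_mul_sq k hβ).ofReal (𝕜 := ℂ)

lemma norm_ofReal_exp_mul_le {z : ℂ} {M t : ℝ} (hz : ‖z‖ ≤ M * Real.exp ((β - b) * t ^ 2)) :
    ‖(Real.exp (-β * t ^ 2) : ℂ) * z‖ ≤ M * Real.exp (-b * t ^ 2) := by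
  rw [norm_mul, norm_real, Real.norm_eq_abs, Real.abs_exp]
  calc Real.exp (-β * t ^ 2) * ‖z‖
      ≤ Real.exp (-β * t ^ 2) * (M * Real.exp ((β - b) * t ^ 2)) := by gcongr
    _ = M * Real.exp (-b * t ^ 2) := by
        rw [mul_left_comm, ← Real.exp_add]
        ring_nf

lemma norm_ofReal_exp_mul_le_of_norm_le {z : ℂ} {M t : ℝ} (hβ : b ≤ β) (hz : ‖z‖ ≤ M) :
    ‖(Real.exp (-β * t ^ 2) : ℂ) * z‖ ≤ M * Real.exp (-b * t ^ 2) :=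
  norm_ofReal_exp_mul_le <| hz.trans <| le_mul_of_one_le_right ((norm_nonneg z).trans hz) <|
    Real.one_le_exp (mul_nonneg (sub_nonneg.mpr hβ) (sq_nonneg t))

lemma norm_mul_cube_le (hκ : ‖κ‖ ≤ 1) (t : ℝ) : ‖κ * t ^ 3‖ ≤ |t| ^ 3 := by
  rw [norm_mul, norm_pow, norm_real, Real.norm_eq_abs]
  exact mul_le_of_le_one_left (by positivity) hκ

lemma integrable_gaussian_mul_one_add_mul_cube (hβ : 0 < β) (κ : ℂ) :
    Integrable fun t : ℝ => (Real.exp (-β * t ^ 2) : ℂ) * (1 + κ * t ^ 3) := by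
  refine ((integrable_pow_mul_ofReal_exp 0 hβ).add
    ((integrable_pow_mul_ofReal_exp 3 hβ).const_mul κ)).congr (Eventually.of_forall fun t => ?_)
  simp only [Pi.add_apply]
  ring

lemma integral_gaussian_mul_one_add_mul_cube (hβ : 0 < β) (κ : ℂ) :
    ∫ t : ℝ, (Real.exp (-β * t ^ 2) : ℂ) * (1 + κ * t ^ 3) =
      ((√(Real.pi / β) : ℝ) : ℂ) := by
  have hgauss : Integrable fun t : ℝ => (Real.exp (-β * t ^ 2) : ℂ) := by
    simpa using integrable_pow_mul_ofReal_exp 0 hβ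
  have hodd : ∫ t : ℝ, (Real.exp (-β * t ^ 2) : ℂ) * (κ * t ^ 3) = 0 :=
    integral_eq_zero_of_odd fun t => by simp only [neg_sq, ofReal_neg]; ring
  have hsub := integral_sub (integrable_gaussian_mul_one_add_mul_cube hβ κ) hgauss
  simp_rw [← mul_sub_one, add_sub_cancel_left, hodd] at hsub
  rw [sub_eq_zero.mp hsub.symm, integral_complex_ofReal, integral_gaussian]

/-- Expanding `exp (κ t³)` to first order, the linear term is odd and integrates to zero, so the
error is governed by the sixth moment. -/
lemma norm_setIntegral_cubicGaussian_sub_le (hb : 0 < b) (hβ : b ^ 2 ≤ β) (hκ : ‖κ‖ ≤ 1)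
    (hS : MeasurableSet S) (hre : ∀ t ∈ S, (κ * t ^ 3).re ≤ (β - b ^ 2) * t ^ 2)
    (hout : ∀ t ∉ S, b ^ 2 ≤ |t|) :
    ‖(∫ t in S, cubicGaussian β κ t) - √(Real.pi / β)‖ ≤ 21 / 8 * √Real.pi / b ^ 7 := by
  have hb2 : 0 < b ^ 2 := by positivity
  have hβ0 : 0 < β := hb2.trans_le hβ
  have h6 := integrable_abs_pow_mul_exp_neg_mul_sq 6 hb2
  have h2 := (integrable_abs_pow_mul_exp_neg_mul_sq 2 hb2).const_mul (3 / 2 / b ^ 4)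
  have herror : ∫ t : ℝ, (|t| ^ 6 * Real.exp (-b ^ 2 * t ^ 2) +
      3 / 2 / b ^ 4 * (|t| ^ 2 * Real.exp (-b ^ 2 * t ^ 2))) = 21 / 8 * √Real.pi / b ^ 7 := by
    rw [integral_add h6 h2, integral_const_mul, integral_abs_pow_even_mul_exp_neg_sq_mul_sq 3 hb,
      integral_abs_pow_even_mul_exp_neg_sq_mul_sq 1 hb]
    norm_num [Nat.doubleFactorial]
    field_simp
    norm_num
  rw [← integral_gaussian_mul_one_add_mul_cube hβ0 κ, ← herror]
  refine norm_setIntegral_sub_integral_le hS (integrableOn_cubicGaussian hb2 hS hre)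
    (integrable_gaussian_mul_one_add_mul_cube hβ0 κ) (h6.add h2) (fun t ht => ?_)
    (fun t ht => ?_)
  · rw [cubicGaussian_eq_mul, ← mul_sub, ← sub_sub]
    refine (norm_ofReal_exp_mul_le (M := |t| ^ 6) ?_).trans
      (le_add_of_nonneg_right (by positivity))
    refine (norm_exp_sub_one_sub_id_le_of_re_le
      (mul_nonneg (sub_nonneg.mpr hβ) (sq_nonneg t)) (hre t ht)).trans ?_
    gcongr
    calc ‖κ * t ^ 3‖ ^ 2 ≤ (|t| ^ 3) ^ 2 := by gcongr; exact norm_mul_cube_le hκ t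
      _ = |t| ^ 6 := by ring
  · have htail : 1 ≤ |t| ^ 2 / b ^ 4 := by
      rw [one_le_div (by positivity), show b ^ 4 = (b ^ 2) ^ 2 by ring]
      exact pow_le_pow_left₀ hb2.le (hout t ht) 2
    have hnorm : ‖1 + κ * t ^ 3‖ ≤ |t| ^ 6 + 3 / 2 * (|t| ^ 2 / b ^ 4) := by
      have htri := (norm_add_le 1 (κ * t ^ 3)).trans
        (add_le_add norm_one.le (norm_mul_cube_le hκ t))
      nlinarith [sq_nonneg (|t| ^ 3 - 1), sq_nonneg (|t| ^ 3)]
    exact (norm_ofReal_exp_mul_le_of_norm_le hβ hnorm).trans_eq (by ring)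

lemma norm_setIntegral_mul_cubicGaussian_le (hb : 0 < b) (hβ : b ^ 2 ≤ β) (hκ : ‖κ‖ ≤ 1)
    (hS : MeasurableSet S) (hre : ∀ t ∈ S, (κ * t ^ 3).re ≤ (β - b ^ 2) * t ^ 2)
    (hout : ∀ t ∉ S, b ^ 2 ≤ |t|) :
    ‖∫ t in S, t * cubicGaussian β κ t‖ ≤ 5 / 4 * √Real.pi / b ^ 5 := by
  have hb2 : 0 < b ^ 2 := by positivity
  have hgauss : Integrable fun t : ℝ => (Real.exp (-β * t ^ 2) : ℂ) * t := by
    simpa [mul_comm] using integrable_pow_mul_ofReal_exp 1 (hb2.trans_le hβ)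
  have hmain : ∫ t : ℝ, (Real.exp (-β * t ^ 2) : ℂ) * t = 0 :=
    integral_eq_zero_of_odd fun t => by simp only [neg_sq, ofReal_neg]; ring
  have h4 := integrable_abs_pow_mul_exp_neg_mul_sq 4 hb2
  have h2 := (integrable_abs_pow_mul_exp_neg_mul_sq 2 hb2).const_mul (1 / b ^ 2)
  have herror : ∫ t : ℝ, (|t| ^ 4 * Real.exp (-b ^ 2 * t ^ 2) +
      1 / b ^ 2 * (|t| ^ 2 * Real.exp (-b ^ 2 * t ^ 2))) = 5 / 4 * √Real.pi / b ^ 5 := by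
    rw [integral_add h4 h2, integral_const_mul, integral_abs_pow_even_mul_exp_neg_sq_mul_sq 2 hb,
      integral_abs_pow_even_mul_exp_neg_sq_mul_sq 1 hb]
    norm_num [Nat.doubleFactorial]
    field_simp
    norm_num
  rw [← sub_zero (∫ t in S, t * cubicGaussian β κ t), ← hmain, ← herror]
  refine norm_setIntegral_sub_integral_le hS (integrableOn_mul_cubicGaussian hb2 hS hre)
    hgauss (h4.add h2) (fun t ht => ?_) (fun t ht => ?_)
  · rw [cubicGaussian_eq_mul, mul_left_comm, ← mul_sub, ← mul_sub_one]
    refine (norm_ofReal_exp_mul_le (M := |t| ^ 4) ?_).trans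
      (le_add_of_nonneg_right (by positivity))
    have hexp := norm_exp_sub_one_le_of_re_le
      (mul_nonneg (sub_nonneg.mpr hβ) (sq_nonneg t)) (hre t ht)
    rw [norm_mul, norm_real, Real.norm_eq_abs]
    calc |t| * ‖cexp (κ * t ^ 3) - 1‖
        ≤ |t| * (|t| ^ 3 * Real.exp ((β - b ^ 2) * t ^ 2)) := by
          gcongr
          exact hexp.trans (by gcongr; exact norm_mul_cube_le hκ t)
      _ = |t| ^ 4 * Real.exp ((β - b ^ 2) * t ^ 2) := by ring
  · have hnorm : ‖(t : ℂ)‖ ≤ |t| ^ 4 + 1 / b ^ 2 * |t| ^ 2 := by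
      rw [norm_real, Real.norm_eq_abs]
      calc |t| ≤ |t| * (|t| / b ^ 2) :=
            le_mul_of_one_le_right (abs_nonneg t) ((one_le_div hb2).mpr (hout t ht))
        _ ≤ |t| ^ 4 + |t| * (|t| / b ^ 2) := le_add_of_nonneg_left (by positivity)
        _ = |t| ^ 4 + 1 / b ^ 2 * |t| ^ 2 := by ring
    exact (norm_ofReal_exp_mul_le_of_norm_le hβ hnorm).trans_eq (by ring)

lemma norm_setIntegral_affine_mul_cubicGaussian_sub_le (hb : 0 < b) (hβ : b ^ 2 ≤ β)
    (hκ : ‖κ‖ ≤ 1) (hS : MeasurableSet S)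
    (hre : ∀ t ∈ S, (κ * t ^ 3).re ≤ (β - b ^ 2) * t ^ 2) (hout : ∀ t ∉ S, b ^ 2 ≤ |t|)
    (p d : ℂ) :
    ‖(∫ t in S, (p + t * d) * cubicGaussian β κ t) - p * √(Real.pi / β)‖ ≤
      ‖p‖ * (21 / 8 * √Real.pi / b ^ 7) + ‖d‖ * (5 / 4 * √Real.pi / b ^ 5) := by
  have hb2 : 0 < b ^ 2 := by positivity
  have hsplit : (∫ t in S, (p + t * d) * cubicGaussian β κ t) - p * √(Real.pi / β) =
      p * ((∫ t in S, cubicGaussian β κ t) - √(Real.pi / β)) +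
        d * ∫ t in S, t * cubicGaussian β κ t := by
    have hdistrib (t : ℝ) : (p + t * d) * cubicGaussian β κ t =
        p * cubicGaussian β κ t + d * (t * cubicGaussian β κ t) := by ring
    simp_rw [hdistrib]
    rw [integral_add ((integrableOn_cubicGaussian hb2 hS hre).const_mul p)
      ((integrableOn_mul_cubicGaussian hb2 hS hre).const_mul d), integral_const_mul,
      integral_const_mul]
    ring
  rw [hsplit]
  refine (norm_add_le _ _).trans ?_
  rw [norm_mul, norm_mul]
  gcongr
  · exact norm_setIntegral_cubicGaussian_sub_le hb hβ hκ hS hre hout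
  · exact norm_setIntegral_mul_cubicGaussian_le hb hβ hκ hS hre hout

end CubicGaussian

section AiryContour

open Complex
open scoped ComplexConjugate Topology

/-- The integrand `(iz)ⁿ exp (i(z³/3 + xz))`, in the complex variable `z`, of the Airy integral
representing `π` times the `n`-th derivative of `Ai` at `x`. -/
noncomputable def airyIntegrand (n : ℕ) (x : ℝ) (z : ℂ) : ℂ :=
  (I * z) ^ n * cexp (I * (z ^ 3 / 3 + x * z))

lemma differentiable_airyIntegrand (n : ℕ) (x : ℝ) : Differentiable ℂ (airyIntegrand n x) := by
  unfold airyIntegrand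
  fun_prop

lemma continuous_airyIntegrand (n : ℕ) (x : ℝ) : Continuous (airyIntegrand n x) :=
  (differentiable_airyIntegrand n x).continuous

lemma exists_hasDerivAt_airyIntegrand (n : ℕ) (x : ℝ) :
    ∃ F : ℂ → ℂ, ∀ z, HasDerivAt F (airyIntegrand n x z) z := by
  obtain ⟨F, hF⟩ := (differentiable_airyIntegrand n x).isExactOn_univ
  exact ⟨F, fun z => hF z (mem_univ z)⟩

lemma norm_airyIntegrand (n : ℕ) (x : ℝ) (z : ℂ) :
    ‖airyIntegrand n x z‖ =
      ‖z‖ ^ n * Real.exp (z.im ^ 3 / 3 - z.re ^ 2 * z.im - x * z.im) := by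
  have hre : (I * (z ^ 3 / 3 + x * z)).re = z.im ^ 3 / 3 - z.re ^ 2 * z.im - x * z.im := by
    simp [pow_succ]
    ring
  rw [airyIntegrand, norm_mul, norm_pow, norm_mul, norm_I, one_mul, norm_exp, hre]

lemma norm_airyIntegrand_le {n : ℕ} (hn : n ≤ 1) {x : ℝ} {z : ℂ} (hre : 1 ≤ z.re)
    (hx : 6 * |x| ≤ z.re ^ 2) (him₀ : 0 ≤ z.im) (him : z.im ≤ z.re) :
    ‖airyIntegrand n x z‖ ≤ 2 * z.re * Real.exp (-(z.re ^ 2 * z.im / 2)) := by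
  have hnorm : ‖z‖ ≤ 2 * z.re := by
    have htri := norm_le_abs_re_add_abs_im z
    rw [abs_of_nonneg (zero_le_one.trans hre), abs_of_nonneg him₀] at htri
    linarith
  have hpow : ‖z‖ ^ n ≤ 2 * z.re :=
    (pow_le_pow_left₀ (norm_nonneg z) hnorm n).trans
      ((pow_le_pow_right₀ (by linarith) hn).trans_eq (pow_one _))
  have hx' : -(z.re ^ 2 / 6) ≤ x := by linarith [neg_abs_le x]
  rw [norm_airyIntegrand]
  gcongr
  linarith [mul_le_mul_of_nonneg_right hx' him₀,
    mul_le_mul_of_nonneg_right (pow_le_pow_left₀ him₀ him 2) him₀]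

lemma airyIntegrand_neg_conj (n : ℕ) (x : ℝ) (z : ℂ) :
    airyIntegrand n x (-conj z) = conj (airyIntegrand n x z) := by
  simp only [airyIntegrand, map_mul, map_pow, map_add, map_div₀, ← exp_conj, conj_I, conj_ofReal,
    map_ofNat]
  ring_nf

lemma airyIntegrand_im_ofReal_mul_I (n : ℕ) (x y : ℝ) : (airyIntegrand n x (y * I)).im = 0 := by
  have hconj := airyIntegrand_neg_conj n x (y * I)
  rw [map_mul, conj_I, conj_ofReal, mul_neg, neg_neg] at hconj
  exact conj_eq_iff_im.mp hconj.symm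

lemma hasDerivAt_airyIntegrand (n : ℕ) (x : ℝ) (z : ℂ) :
    HasDerivAt (fun x => airyIntegrand n x z) (airyIntegrand (n + 1) x z) x := by
  have hphase : HasDerivAt (fun x : ℝ => I * (z ^ 3 / 3 + x * z)) (I * z) x := by
    simpa using (((hasDerivAt_id x).ofReal_comp.mul_const z).const_add (z ^ 3 / 3)).const_mul I
  refine (hphase.cexp.const_mul ((I * z) ^ n)).congr_deriv ?_
  rw [airyIntegrand]
  ring

lemma airyIntegrand_saddle {x β : ℝ} {s d : ℂ} (hs : s ^ 2 = -x) (hd : I * s * d ^ 2 = -β)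
    (n : ℕ) (t : ℝ) :
    airyIntegrand n x (s + t * d) = I ^ n * cexp (-(2 / 3) * s ^ 3 * I) *
      ((s + t * d) ^ n * cubicGaussian β (I * d ^ 3 / 3) t) := by
  have hphase : I * ((s + t * d) ^ 3 / 3 + x * (s + t * d)) =
      -(2 / 3) * s ^ 3 * I + (-β * t ^ 2 + I * d ^ 3 / 3 * t ^ 3) := by
    linear_combination I * (s + t * d) * hs + t ^ 2 * hd
  rw [airyIntegrand, hphase, Complex.exp_add, cubicGaussian, mul_pow]
  ring

section Primitive

variable {n : ℕ} {x : ℝ} {F : ℂ → ℂ}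

lemma re_primitive_ofReal_mul_I (hF : ∀ z, HasDerivAt F (airyIntegrand n x z) z) (y : ℝ) :
    (F (y * I)).re = (F 0).re := by
  have hderiv (u : ℝ) : HasDerivAt (fun u : ℝ => (F (u * I)).re) 0 u := by
    have hline : HasDerivAt (fun u : ℝ => (u : ℂ) * I) I u := by
      simpa using (hasDerivAt_id u).ofReal_comp.mul_const I
    have hre : HasDerivAt (fun u : ℝ => (F (u * I)).re) (airyIntegrand n x (u * I) * I).re u :=
      reCLM.hasFDerivAt.comp_hasDerivAt u ((hF (u * I)).comp u hline)
    simpa [airyIntegrand_im_ofReal_mul_I] using hre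
  have hconst := is_const_of_deriv_eq_zero (fun u => (hderiv u).differentiableAt)
    (fun u => (hderiv u).deriv) y 0
  simpa using hconst

lemma norm_primitive_sub_le (hF : ∀ z, HasDerivAt F (airyIntegrand n x z) z) (hn : n ≤ 1) {z : ℂ}
    (hre : 1 ≤ z.re) (hx : 6 * |x| ≤ z.re ^ 2) (him₀ : 0 ≤ z.im) (him : z.im ≤ z.re) :
    ‖F z - F z.re‖ ≤ 4 / z.re := by
  set t := z.re with ht
  have ht₀ : 0 < t := by linarith
  have hline (y : ℝ) : HasDerivAt (fun y : ℝ => F (t + y * I) - F t)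
      (airyIntegrand n x (t + y * I) * I) y := by
    have hγ : HasDerivAt (fun y : ℝ => (t : ℂ) + y * I) I y := by
      simpa using ((hasDerivAt_id y).ofReal_comp.mul_const I).const_add (t : ℂ)
    exact ((hF _).comp y hγ).sub_const _
  have hmajorant (y : ℝ) : HasDerivAt (fun y : ℝ => 4 / t * (1 - Real.exp (-(t ^ 2 * y / 2))))
      (2 * t * Real.exp (-(t ^ 2 * y / 2))) y := by
    have hlin : HasDerivAt (fun y : ℝ => -(t ^ 2 * y / 2)) (-(t ^ 2 / 2)) y := by
      simpa using (((hasDerivAt_id y).const_mul (t ^ 2)).div_const 2).fun_neg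
    refine ((hlin.exp.const_sub 1).const_mul (4 / t)).congr_deriv ?_
    field_simp
    ring
  have hbound : ∀ y ∈ Ico 0 t,
      ‖airyIntegrand n x (t + y * I) * I‖ ≤ 2 * t * Real.exp (-(t ^ 2 * y / 2)) := by
    rintro y ⟨hy₀, hyt⟩
    have hle := norm_airyIntegrand_le (z := t + y * I) hn (by simpa using hre) (by simpa using hx)
      (by simpa using hy₀) (by simpa using hyt.le)
    rw [norm_mul, norm_I, mul_one]
    simpa using hle
  have h := image_norm_le_of_norm_deriv_right_le_deriv_boundary (a := 0) (b := t)
    (fun y _ => (hline y).continuousAt.continuousWithinAt)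
    (fun y _ => (hline y).hasDerivWithinAt) (by simp) hmajorant hbound ⟨him₀, him⟩
  rw [ht, re_add_im] at h
  exact h.trans (mul_le_of_le_one_right (div_nonneg zero_le_four ht₀.le)
    (sub_le_self 1 (Real.exp_pos (-(t ^ 2 * z.im / 2))).le))

lemma tendsto_primitive_sub (hF : ∀ z, HasDerivAt F (airyIntegrand n x z) z) (hn : n ≤ 1)
    {γ : ℝ → ℂ} (hre : Tendsto (fun t => (γ t).re) atTop atTop)
    (him₀ : ∀ᶠ t in atTop, 0 ≤ (γ t).im) (him : ∀ᶠ t in atTop, (γ t).im ≤ (γ t).re) :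
    Tendsto (fun t => F (γ t) - F (γ t).re) atTop (𝓝 0) := by
  refine squeeze_zero_norm' ?_ (hre.const_div_atTop 4)
  filter_upwards [hre.eventually_ge_atTop 1, ((tendsto_pow_atTop two_ne_zero).comp
    hre).eventually_ge_atTop (6 * |x|), him₀, him] with t h₁ hx h₀ hle
  exact norm_primitive_sub_le hF hn h₁ hx h₀ hle

lemma tendsto_primitive_ray (hF : ∀ z, HasDerivAt F (airyIntegrand n x z) z) {p d : ℂ} {c : ℝ}
    (hint : IntegrableOn (fun t : ℝ => airyIntegrand n x (p + t * d)) (Ioi c)) :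
    Tendsto (fun t : ℝ => F (p + t * d)) atTop
      (𝓝 (F (p + c * d) + d * ∫ t in Ioi c, airyIntegrand n x (p + t * d))) := by
  have hderiv (t : ℝ) :
      HasDerivAt (fun t : ℝ => F (p + t * d)) (airyIntegrand n x (p + t * d) * d) t := by
    have hray : HasDerivAt (fun t : ℝ => p + t * d) d t := by
      simpa using ((hasDerivAt_id t).ofReal_comp.mul_const d).const_add p
    exact (hF _).comp t hray
  have hcont : Continuous fun t : ℝ => airyIntegrand n x (p + t * d) * d :=
    ((continuous_airyIntegrand n x).comp (by fun_prop)).mul_const d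
  have hlim := intervalIntegral_tendsto_integral_Ioi c (hint.mul_const d) tendsto_id
  simp only [id, intervalIntegral.integral_eq_sub_of_hasDerivAt (fun t _ => hderiv t)
    (hcont.intervalIntegrable _ _), integral_mul_const] at hlim
  simpa [mul_comm, add_comm] using hlim.const_add (F (p + c * d))

end Primitive

lemma integrable_airyIntegrand_horizontal (n : ℕ) (x : ℝ) {c : ℝ} (hc : 0 < c) :
    Integrable fun t : ℝ => airyIntegrand n x (t + c * I) := by
  have hcont := (continuous_airyIntegrand n x).comp
    (show Continuous fun t : ℝ => (t : ℂ) + c * I by fun_prop)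
  refine ((integrable_norm_affine_pow_mul_exp_neg_mul_sq (c * I) 1 n hc).const_mul
    (Real.exp (c ^ 3 / 3 - x * c))).mono' hcont.aestronglyMeasurable
    (Eventually.of_forall fun t => ?_)
  rw [norm_airyIntegrand, mul_left_comm, ← Real.exp_add]
  simp only [add_re, add_im, ofReal_re, ofReal_im, re_ofReal_mul, im_ofReal_mul, I_re, I_im]
  ring_nf
  rfl

/-- The real part of the integral of `airyIntegrand n x` over a half-line which starts on the
imaginary axis; at height `1` above the real axis, where it converges absolutely. -/
noncomputable def airyIntegral (n : ℕ) (x : ℝ) : ℝ :=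
  (∫ t in Ioi (0 : ℝ), airyIntegrand n x (t + (1 : ℝ) * I)).re

lemma tendsto_re_primitive {n : ℕ} {x : ℝ} {F : ℂ → ℂ}
    (hF : ∀ z, HasDerivAt F (airyIntegrand n x z) z) (hn : n ≤ 1)
    {γ : ℝ → ℂ} (hre : Tendsto (fun t => (γ t).re) atTop atTop)
    (him₀ : ∀ᶠ t in atTop, 0 ≤ (γ t).im) (him : ∀ᶠ t in atTop, (γ t).im ≤ (γ t).re) :
    Tendsto (fun t => (F (γ t)).re) atTop (𝓝 ((F 0).re + airyIntegral n x)) := by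
  have hline : Tendsto (fun t : ℝ => F (t + (1 : ℝ) * I)) atTop
      (𝓝 (F ((1 : ℝ) * I) + ∫ t in Ioi (0 : ℝ), airyIntegrand n x (t + (1 : ℝ) * I))) := by
    have hint := (integrable_airyIntegrand_horizontal n x one_pos).integrableOn (s := Ioi 0)
    have h := tendsto_primitive_ray hF (p := (1 : ℝ) * I) (d := 1) (c := 0)
      (by simpa [add_comm] using hint)
    simpa [add_comm] using h
  have hreal : Tendsto (fun t : ℝ => F t) atTop
      (𝓝 (F ((1 : ℝ) * I) + ∫ t in Ioi (0 : ℝ), airyIntegrand n x (t + (1 : ℝ) * I))) := by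
    have hdiff := tendsto_primitive_sub hF hn (γ := fun t : ℝ => t + (1 : ℝ) * I)
      (tendsto_id.congr fun t => by simp) (by simp) (by simpa using eventually_ge_atTop (1 : ℝ))
    simpa using hline.sub hdiff
  have hγ := (hreal.comp hre).add (tendsto_primitive_sub hF hn hre him₀ him)
  have hγre := (continuous_re.tendsto _).comp hγ
  simpa only [Function.comp_def, sub_add_cancel, add_sub_cancel, add_zero, add_re,
    re_primitive_ofReal_mul_I hF, airyIntegral] using hγre

lemma airyIntegral_eq_re_ray {n : ℕ} {x c : ℝ} {p d : ℂ} (hn : n ≤ 1) (hd : 0 < d.re)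
    (hstart : (p + c * d).re = 0) (him₀ : ∀ᶠ t : ℝ in atTop, 0 ≤ (p + t * d).im)
    (him : ∀ᶠ t : ℝ in atTop, (p + t * d).im ≤ (p + t * d).re)
    (hint : IntegrableOn (fun t : ℝ => airyIntegrand n x (p + t * d)) (Ioi c)) :
    airyIntegral n x = (d * ∫ t in Ioi c, airyIntegrand n x (p + t * d)).re := by
  obtain ⟨F, hF⟩ := exists_hasDerivAt_airyIntegrand n x
  have hre : Tendsto (fun t : ℝ => (p + t * d).re) atTop atTop := by
    simpa using tendsto_atTop_add_const_left _ p.re (tendsto_id.atTop_mul_const hd)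
  have hlim := (continuous_re.tendsto _).comp (tendsto_primitive_ray hF hint)
  have hF₀ : (F (p + c * d)).re = (F 0).re := by
    rw [← re_primitive_ofReal_mul_I hF (p + c * d).im]
    congr 2
    exact Complex.ext (by simp [hstart]) (by simp)
  have h := tendsto_nhds_unique (tendsto_re_primitive hF hn hre him₀ him) hlim
  rwa [add_re, hF₀, add_right_inj] at h

lemma airyIntegral_eq_half_integral_horizontal {n : ℕ} (hn : n ≤ 1) (x : ℝ) {c : ℝ} (hc : 0 < c) :
    airyIntegral n x = (∫ t : ℝ, airyIntegrand n x (c * I + t * 1)).re / 2 := by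
  have hint : Integrable fun t : ℝ => airyIntegrand n x (c * I + t * 1) := by
    simpa [add_comm] using integrable_airyIntegrand_horizontal n x hc
  have heven (t : ℝ) : (airyIntegrand n x (c * I + |t| * 1)).re =
      (airyIntegrand n x (c * I + t * 1)).re := by
    obtain h | h := abs_choice t
    · rw [h]
    · rw [h, ← conj_re, ← airyIntegrand_neg_conj]
      simp [add_comm]
  have hhalf := integral_comp_abs (f := fun t : ℝ => (airyIntegrand n x (c * I + t * 1)).re)
  simp only [heven] at hhalf
  rw [airyIntegral_eq_re_ray hn (p := c * I) (d := 1) (c := 0) (by simp) (by simp)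
    (by simp [hc.le]) (by simpa using eventually_ge_atTop c) hint.integrableOn, one_mul,
    ← reCLM_apply, ← reCLM_apply, ← reCLM.integral_comp_comm hint.integrableOn,
    ← reCLM.integral_comp_comm hint]
  exact eq_div_of_mul_eq two_ne_zero ((mul_comm _ _).trans hhalf.symm)

lemma Ai_eq_airyIntegral (x : ℝ) : Ai x = 1 / Real.pi * airyIntegral 0 x := by
  obtain ⟨F, hF⟩ := exists_hasDerivAt_airyIntegrand 0 x
  have hderiv (t : ℝ) :
      HasDerivAt (fun t : ℝ => (F t).re) (Real.cos (t ^ 3 / 3 + x * t)) t := by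
    refine (reCLM.hasFDerivAt.comp_hasDerivAt t (hF t).comp_ofReal).congr_deriv ?_
    rw [reCLM_apply, airyIntegrand, pow_zero, one_mul, mul_comm I, ← exp_ofReal_mul_I_re]
    push_cast
    rfl
  have hint (b : ℝ) : ∫ t in (0 : ℝ)..b, Real.cos (t ^ 3 / 3 + x * t) = (F b).re - (F 0).re := by
    simpa using intervalIntegral.integral_eq_sub_of_hasDerivAt (a := 0) (b := b)
      (fun t _ => hderiv t) (Continuous.intervalIntegrable (by fun_prop) _ _)
  have hlim := (tendsto_re_primitive hF zero_le_one (γ := ofReal) tendsto_id (by simp)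
    (by simpa using eventually_ge_atTop (0 : ℝ))).sub_const (F 0).re
  rw [Ai]
  congr 1
  refine Tendsto.limUnder_eq ?_
  simpa only [hint, add_sub_cancel_left] using hlim

lemma hasDerivAt_airyIntegral (n : ℕ) (x : ℝ) :
    HasDerivAt (airyIntegral n) (airyIntegral (n + 1) x) x := by
  have hbound : Integrable fun t : ℝ => ‖((1 : ℝ) * I : ℂ) + t * 1‖ ^ (n + 1) *
      Real.exp (-1 * t ^ 2) * Real.exp (1 / 3 + (|x| + 1)) :=
    (integrable_norm_affine_pow_mul_exp_neg_mul_sq _ 1 (n + 1) one_pos).mul_const _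
  have hle : ∀ t : ℝ, ∀ u ∈ Metric.ball x 1, ‖airyIntegrand (n + 1) u (t + (1 : ℝ) * I)‖ ≤
      ‖((1 : ℝ) * I : ℂ) + t * 1‖ ^ (n + 1) *
        Real.exp (-1 * t ^ 2) * Real.exp (1 / 3 + (|x| + 1)) := by
    intro t u hu
    have hux : -u ≤ |x| + 1 := by
      have := (abs_lt.mp (by simpa [Real.dist_eq] using hu : |u - x| < 1)).1
      linarith [neg_le_abs x]
    rw [norm_airyIntegrand, mul_assoc, ← Real.exp_add, mul_one, add_comm]
    gcongr
    simp only [add_re, add_im, ofReal_re, ofReal_im, re_ofReal_mul, im_ofReal_mul, I_re, I_im]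
    linarith
  have h := hasDerivAt_integral_of_dominated_loc_of_deriv_le
    (μ := volume.restrict (Ioi (0 : ℝ))) (Metric.ball_mem_nhds x one_pos)
    (Eventually.of_forall fun u =>
      (integrable_airyIntegrand_horizontal n u one_pos).integrableOn.aestronglyMeasurable)
    (integrable_airyIntegrand_horizontal n x one_pos).integrableOn
    (integrable_airyIntegrand_horizontal (n + 1) x one_pos).integrableOn.aestronglyMeasurable
    (Eventually.of_forall hle) hbound.integrableOn
    (Eventually.of_forall fun t u _ => hasDerivAt_airyIntegrand n u (t + (1 : ℝ) * I))
  exact reCLM.hasFDerivAt.comp_hasDerivAt x h.2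

lemma deriv_Ai_eq_airyIntegral (x : ℝ) : deriv Ai x = 1 / Real.pi * airyIntegral 1 x := by
  rw [funext Ai_eq_airyIntegral]
  exact ((hasDerivAt_airyIntegral 0 x).const_mul _).deriv

end AiryContour

section SaddlePoint

open Complex

lemma re_I_div_three_mul_cube (t : ℝ) : (I / 3 * (t : ℂ) ^ 3).re = 0 := by
  simp [← ofReal_pow]

lemma re_oblique_mul_cube (t : ℝ) :
    (-(2 / 3) * (1 + I) * (t : ℂ) ^ 3).re = -(2 / 3) * t ^ 3 := by
  simp [← ofReal_pow]

lemma norm_one_add_I : ‖1 + I‖ = √2 := by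
  rw [← ofReal_one, ← one_mul I, ← ofReal_one, norm_add_mul_I]
  norm_num

lemma norm_oblique_le_one : ‖-(2 / 3) * (1 + I)‖ ≤ 1 := by
  have hnorm : ‖(2 / 3 : ℂ)‖ = 2 / 3 := by norm_num
  rw [norm_mul, norm_neg, hnorm, norm_one_add_I]
  nlinarith [Real.sq_sqrt (show (0 : ℝ) ≤ 2 by norm_num), Real.sqrt_nonneg 2]

lemma re_oblique_mul_cube_le {a t : ℝ} (ha : 0 < a) (ht : t ∈ Ioi (-a)) :
    (-(2 / 3) * (1 + I) * (t : ℂ) ^ 3).re ≤ (2 * a - a) * t ^ 2 := by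
  rw [re_oblique_mul_cube]
  nlinarith [mul_nonneg (sub_nonneg.mpr (mem_Ioi.mp ht).le) (sq_nonneg t),
    mul_nonneg ha.le (sq_nonneg t)]

lemma airyIntegral_sq {n : ℕ} (hn : n ≤ 1) {a : ℝ} (ha : 0 < a) :
    airyIntegral n (a ^ 2) = Real.exp (-(2 / 3 * a ^ 3)) / 2 *
      (I ^ n * ∫ t : ℝ, (a * I + t * 1) ^ n * cubicGaussian a (I / 3) t).re := by
  have hexp : cexp (-(2 / 3) * (a * I) ^ 3 * I) = (Real.exp (-(2 / 3 * a ^ 3)) : ℂ) := by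
    push_cast
    congr 1
    linear_combination -(2 / 3 : ℂ) * a ^ 3 * I_pow_four
  have hsaddle (t : ℝ) : airyIntegrand n (a ^ 2) (a * I + t * 1) =
      Real.exp (-(2 / 3 * a ^ 3)) *
        (I ^ n * ((a * I + t * 1) ^ n * cubicGaussian a (I / 3) t)) := by
    rw [airyIntegrand_saddle (β := a) (by simp [mul_pow]) (by linear_combination a * I_sq), hexp]
    simp only [one_pow, mul_one]
    ring
  rw [airyIntegral_eq_half_integral_horizontal hn _ ha]
  simp only [hsaddle, integral_const_mul, re_ofReal_mul]
  ring

lemma airyIntegral_neg_sq {n : ℕ} (hn : n ≤ 1) {a : ℝ} (ha : 0 < a) :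
    airyIntegral n (-a ^ 2) =
      ((1 + I) * I ^ n * cexp (-(2 / 3 * a ^ 3 : ℝ) * I) * ∫ t in Ioi (-a),
        (a + t * (1 + I)) ^ n * cubicGaussian (2 * a) (-(2 / 3) * (1 + I)) t).re := by
  have hcube : I * (1 + I) ^ 3 / 3 = -(2 / 3) * (1 + I) := by
    linear_combination (I ^ 2 / 3 + I + 2 / 3) * I_sq
  have hsaddle (t : ℝ) : airyIntegrand n (-a ^ 2) (a + t * (1 + I)) =
      I ^ n * cexp (-(2 / 3 * a ^ 3 : ℝ) * I) *
        ((a + t * (1 + I)) ^ n * cubicGaussian (2 * a) (-(2 / 3) * (1 + I)) t) := by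
    rw [airyIntegrand_saddle (β := 2 * a) (by push_cast; ring)
      (by push_cast; linear_combination a * (2 + I) * I_sq), hcube]
    push_cast
    ring_nf
  have hint := (integrableOn_affine_pow_mul_cubicGaussian ha measurableSet_Ioi
    (fun t ht => re_oblique_mul_cube_le ha ht) a (1 + I) n).const_mul
      (I ^ n * cexp (-(2 / 3 * a ^ 3 : ℝ) * I))
  simp only [← hsaddle] at hint
  rw [airyIntegral_eq_re_ray hn (p := a) (d := 1 + I) (c := -a) (by simp) (by simp)
    (by simpa using eventually_ge_atTop (0 : ℝ)) (by simp [ha.le]) hint]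
  simp only [hsaddle, integral_const_mul]
  ring_nf

variable {b : ℝ}

lemma sqrt_pi_div_sq (hb : 0 < b) : √(Real.pi / b ^ 2) = √Real.pi / b := by
  rw [Real.sqrt_div' _ (sq_nonneg b), Real.sqrt_sq hb.le]

lemma sqrt_pi_div_two_mul_sq (hb : 0 < b) :
    √(Real.pi / (2 * b ^ 2)) = √Real.pi / (√2 * b) := by
  rw [Real.sqrt_div' _ (by positivity), Real.sqrt_mul zero_le_two, Real.sqrt_sq hb.le]

lemma norm_integral_horizontal_sub_le (hb : 0 < b) :
    ‖(∫ t : ℝ, cubicGaussian (b ^ 2) (I / 3) t) - (√Real.pi / b : ℝ)‖ ≤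
      21 / 8 * √Real.pi / b ^ 7 := by
  rw [← sqrt_pi_div_sq hb, ← setIntegral_univ]
  exact norm_setIntegral_cubicGaussian_sub_le hb le_rfl (by norm_num) MeasurableSet.univ
    (fun t _ => (re_I_div_three_mul_cube t).trans_le (by simp)) (fun t ht => absurd (mem_univ t) ht)

lemma norm_integral_horizontal_affine_sub_le (hb : 0 < b) (p d : ℂ) :
    ‖(∫ t : ℝ, (p + t * d) * cubicGaussian (b ^ 2) (I / 3) t) - p * (√Real.pi / b : ℝ)‖ ≤
      ‖p‖ * (21 / 8 * √Real.pi / b ^ 7) + ‖d‖ * (5 / 4 * √Real.pi / b ^ 5) := by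
  rw [← sqrt_pi_div_sq hb, ← setIntegral_univ]
  exact norm_setIntegral_affine_mul_cubicGaussian_sub_le hb le_rfl (by norm_num)
    MeasurableSet.univ (fun t _ => (re_I_div_three_mul_cube t).trans_le (by simp))
    (fun t ht => absurd (mem_univ t) ht) p d

lemma norm_integral_oblique_sub_le (hb : 0 < b) :
    ‖(∫ t in Ioi (-b ^ 2), cubicGaussian (2 * b ^ 2) (-(2 / 3) * (1 + I)) t) -
      (√Real.pi / (√2 * b) : ℝ)‖ ≤ 21 / 8 * √Real.pi / b ^ 7 := by
  rw [← sqrt_pi_div_two_mul_sq hb]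
  exact norm_setIntegral_cubicGaussian_sub_le hb (by linarith [sq_nonneg b]) norm_oblique_le_one
    measurableSet_Ioi (fun t ht => re_oblique_mul_cube_le (by positivity) ht)
    (fun t ht => le_abs.mpr (Or.inr (le_neg.mpr (notMem_Ioi.mp ht))))

lemma norm_integral_oblique_affine_sub_le (hb : 0 < b) (p d : ℂ) :
    ‖(∫ t in Ioi (-b ^ 2), (p + t * d) * cubicGaussian (2 * b ^ 2) (-(2 / 3) * (1 + I)) t) -
      p * (√Real.pi / (√2 * b) : ℝ)‖ ≤
      ‖p‖ * (21 / 8 * √Real.pi / b ^ 7) + ‖d‖ * (5 / 4 * √Real.pi / b ^ 5) := by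
  rw [← sqrt_pi_div_two_mul_sq hb]
  exact norm_setIntegral_affine_mul_cubicGaussian_sub_le hb (by linarith [sq_nonneg b])
    norm_oblique_le_one measurableSet_Ioi (fun t ht => re_oblique_mul_cube_le (by positivity) ht)
    (fun t ht => le_abs.mpr (Or.inr (le_neg.mpr (notMem_Ioi.mp ht)))) p d

lemma abs_Ai_pow_four_sub_one_le (hb : 0 < b) :
    |2 * √Real.pi * b * Real.exp (2 / 3 * b ^ 6) * Ai (b ^ 4) - 1| ≤ 21 / 8 / b ^ 6 := by
  have hb2 : 0 < b ^ 2 := by positivity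
  have hsaddle := norm_integral_horizontal_sub_le hb
  have hAi := airyIntegral_sq zero_le_one hb2
  simp only [pow_zero, one_mul, ← pow_mul, Nat.reduceMul] at hAi
  set G := ∫ t : ℝ, cubicGaussian (b ^ 2) (I / 3) t
  have hpi := Real.sq_sqrt Real.pi_pos.le
  have hfactor : 2 * √Real.pi * b * Real.exp (2 / 3 * b ^ 6) * Ai (b ^ 4) - 1 =
      b / √Real.pi * (G - (√Real.pi / b : ℝ)).re := by
    rw [Ai_eq_airyIntegral, hAi, Real.exp_neg, sub_re, ofReal_re]
    field_simp
    linear_combination b * G.re * hpi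
  rw [hfactor, abs_mul, abs_of_pos (by positivity)]
  calc b / √Real.pi * |(G - (√Real.pi / b : ℝ)).re|
      ≤ b / √Real.pi * (21 / 8 * √Real.pi / b ^ 7) := by
        gcongr
        exact (abs_re_le_norm _).trans hsaddle
    _ = 21 / 8 / b ^ 6 := by field_simp

lemma abs_deriv_Ai_pow_four_add_one_le (hb : 0 < b) :
    |2 * √Real.pi * b⁻¹ * Real.exp (2 / 3 * b ^ 6) * deriv Ai (b ^ 4) + 1| ≤ 31 / 8 / b ^ 6 := by
  have hb2 : 0 < b ^ 2 := by positivity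
  have hsaddle := norm_integral_horizontal_affine_sub_le hb ((b ^ 2 : ℝ) * I) 1
  have hAi := airyIntegral_sq le_rfl hb2
  simp only [pow_one, ← pow_mul, Nat.reduceMul] at hAi
  set G := ∫ t : ℝ, ((b ^ 2 : ℝ) * I + t * 1) * cubicGaussian (b ^ 2) (I / 3) t
  have hpi := Real.sq_sqrt Real.pi_pos.le
  have hfactor : 2 * √Real.pi * b⁻¹ * Real.exp (2 / 3 * b ^ 6) * deriv Ai (b ^ 4) + 1 =
      1 / (b * √Real.pi) * (I * (G - (b ^ 2 : ℝ) * I * (√Real.pi / b : ℝ))).re := by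
    have hre : (I * ((b ^ 2 : ℝ) * I * (√Real.pi / b : ℝ))).re = -(b * √Real.pi) := by
      simp only [mul_re, mul_im, I_re, I_im, ofReal_re, ofReal_im]
      field_simp
      ring
    rw [deriv_Ai_eq_airyIntegral, hAi, Real.exp_neg, mul_sub, sub_re, hre]
    field_simp
    linear_combination (I * G).re * hpi
  rw [hfactor, abs_mul, abs_of_pos (by positivity)]
  calc 1 / (b * √Real.pi) * |(I * (G - (b ^ 2 : ℝ) * I * (√Real.pi / b : ℝ))).re|
      ≤ 1 / (b * √Real.pi) *
          (b ^ 2 * (21 / 8 * √Real.pi / b ^ 7) + 1 * (5 / 4 * √Real.pi / b ^ 5)) := by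
        gcongr
        refine (abs_re_le_norm _).trans ?_
        simpa [abs_of_pos hb2] using hsaddle
    _ = 31 / 8 / b ^ 6 := by
        field_simp
        norm_num

lemma re_one_add_I_mul_exp (ζ : ℝ) :
    ((1 + I) * cexp (-ζ * I)).re = √2 * Real.cos (ζ - Real.pi / 4) := by
  rw [← ofReal_neg, exp_mul_I, ← ofReal_cos, ← ofReal_sin, Real.cos_neg, Real.sin_neg,
    Real.cos_sub, Real.cos_pi_div_four, Real.sin_pi_div_four]
  simp only [mul_re, mul_im, add_re, add_im, one_re, one_im, I_re, I_im, ofReal_re, ofReal_im]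
  linear_combination -((Real.cos ζ + Real.sin ζ) / 2) * Real.mul_self_sqrt zero_le_two

lemma re_one_add_I_mul_I_mul_exp (ζ : ℝ) :
    ((1 + I) * I * cexp (-ζ * I)).re = √2 * Real.sin (ζ - Real.pi / 4) := by
  rw [← ofReal_neg, exp_mul_I, ← ofReal_cos, ← ofReal_sin, Real.cos_neg, Real.sin_neg,
    Real.sin_sub, Real.cos_pi_div_four, Real.sin_pi_div_four]
  simp only [mul_re, mul_im, add_re, add_im, one_re, one_im, I_re, I_im, ofReal_re, ofReal_im]
  linear_combination -((Real.sin ζ - Real.cos ζ) / 2) * Real.mul_self_sqrt zero_le_two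

lemma norm_one_add_I_mul_I_pow_mul_exp (n : ℕ) (ζ : ℝ) :
    ‖(1 + I) * I ^ n * cexp (-ζ * I)‖ = √2 := by
  rw [norm_mul, norm_mul, norm_pow, norm_I, one_pow, norm_one_add_I, ← ofReal_neg,
    norm_exp_ofReal_mul_I, mul_one, mul_one]

lemma abs_Ai_neg_pow_four_sub_le (hb : 0 < b) :
    |Ai (-b ^ 4) - 1 / √Real.pi * b⁻¹ * Real.cos (2 / 3 * b ^ 6 - Real.pi / 4)| ≤
      21 / 8 / b ^ 7 := by
  have hb2 : 0 < b ^ 2 := by positivity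
  have hsaddle := norm_integral_oblique_sub_le hb
  have hAi := airyIntegral_neg_sq zero_le_one hb2
  have hre := re_one_add_I_mul_exp (2 / 3 * b ^ 6)
  have hnorm := norm_one_add_I_mul_I_pow_mul_exp 0 (2 / 3 * b ^ 6)
  simp only [pow_zero, one_mul, mul_one, ← pow_mul, Nat.reduceMul] at hAi hnorm
  set w := (1 + I) * cexp (-(2 / 3 * b ^ 6 : ℝ) * I)
  set H := ∫ t in Ioi (-b ^ 2), cubicGaussian (2 * b ^ 2) (-(2 / 3) * (1 + I)) t
  have hpi := Real.sq_sqrt Real.pi_pos.le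
  have hfactor : Ai (-b ^ 4) - 1 / √Real.pi * b⁻¹ * Real.cos (2 / 3 * b ^ 6 - Real.pi / 4) =
      1 / Real.pi * (w * (H - (√Real.pi / (√2 * b) : ℝ))).re := by
    rw [Ai_eq_airyIntegral, hAi, mul_sub, sub_re, re_mul_ofReal, hre]
    generalize Real.cos (2 / 3 * b ^ 6 - Real.pi / 4) = c
    field_simp
    linear_combination c * hpi
  rw [hfactor, abs_mul, abs_of_pos (by positivity)]
  calc 1 / Real.pi * |(w * (H - (√Real.pi / (√2 * b) : ℝ))).re|
      ≤ 1 / Real.pi * (√Real.pi * (21 / 8 * √Real.pi / b ^ 7)) := by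
        gcongr
        refine (abs_re_le_norm _).trans ((norm_mul_le _ _).trans ?_)
        rw [hnorm]
        gcongr
        exact Real.two_le_pi
    _ = 21 / 8 / b ^ 7 := by
        field_simp
        exact hpi

lemma abs_deriv_Ai_neg_pow_four_sub_le (hb : 0 < b) :
    |deriv Ai (-b ^ 4) - 1 / √Real.pi * b * Real.sin (2 / 3 * b ^ 6 - Real.pi / 4)| ≤
      41 / 8 / b ^ 5 := by
  have hb2 : 0 < b ^ 2 := by positivity
  have hsaddle := norm_integral_oblique_affine_sub_le hb ((b ^ 2 : ℝ) : ℂ) (1 + I)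
  rw [norm_one_add_I, norm_real, Real.norm_of_nonneg hb2.le] at hsaddle
  have hAi := airyIntegral_neg_sq le_rfl hb2
  have hre := re_one_add_I_mul_I_mul_exp (2 / 3 * b ^ 6)
  have hnorm := norm_one_add_I_mul_I_pow_mul_exp 1 (2 / 3 * b ^ 6)
  simp only [pow_one, ← pow_mul, Nat.reduceMul] at hAi hnorm
  set w := (1 + I) * I * cexp (-(2 / 3 * b ^ 6 : ℝ) * I)
  set H := ∫ t in Ioi (-b ^ 2),
    ((b ^ 2 : ℝ) + t * (1 + I)) * cubicGaussian (2 * b ^ 2) (-(2 / 3) * (1 + I)) t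
  have hpi := Real.sq_sqrt Real.pi_pos.le
  have hfactor :
      deriv Ai (-b ^ 4) - 1 / √Real.pi * b * Real.sin (2 / 3 * b ^ 6 - Real.pi / 4) =
        1 / Real.pi * (w * (H - (b ^ 2 : ℝ) * (√Real.pi / (√2 * b) : ℝ))).re := by
    rw [deriv_Ai_eq_airyIntegral, hAi, mul_sub, sub_re, ← ofReal_mul, re_mul_ofReal, hre]
    generalize Real.sin (2 / 3 * b ^ 6 - Real.pi / 4) = s
    field_simp
    linear_combination b * s * hpi
  rw [hfactor, abs_mul, abs_of_pos (by positivity)]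
  calc 1 / Real.pi * |(w * (H - (b ^ 2 : ℝ) * (√Real.pi / (√2 * b) : ℝ))).re|
      ≤ 1 / Real.pi * (√Real.pi * (b ^ 2 * (21 / 8 * √Real.pi / b ^ 7) +
          2 * (5 / 4 * √Real.pi / b ^ 5))) := by
        gcongr
        refine (abs_re_le_norm _).trans ((norm_mul_le _ _).trans ?_)
        rw [hnorm]
        gcongr
        · exact Real.two_le_pi
        · refine hsaddle.trans ?_
          gcongr
          exact Real.sqrt_le_iff.mpr (by norm_num)
    _ = 41 / 8 / b ^ 5 := by
        field_simp
        linear_combination 164 * hpi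

end SaddlePoint

lemma pow_four_rpow {b : ℝ} (hb : 0 ≤ b) (r : ℝ) : (b ^ 4) ^ r = b ^ (4 * r) := by
  rw [← Real.rpow_natCast, ← Real.rpow_mul hb]
  norm_num

theorem airy_asymptotics_general {x : ℝ} (hx : 0 < x) :
    |2 * √Real.pi * x ^ ((1:ℝ)/4) * Real.exp ((2/3) * x ^ ((3:ℝ)/2)) * Ai x - 1|
        ≤ 21 / 8 * x ^ (-(3:ℝ)/2) ∧
      |2 * √Real.pi * x ^ (-(1:ℝ)/4) * Real.exp ((2/3) * x ^ ((3:ℝ)/2)) * deriv Ai x + 1|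
        ≤ 31 / 8 * x ^ (-(3:ℝ)/2) ∧
      |Ai (-x) - Real.pi ^ (-(1:ℝ)/2) * x ^ (-(1:ℝ)/4) *
          Real.cos ((2/3) * x ^ ((3:ℝ)/2) - Real.pi / 4)| ≤ 21 / 8 * x ^ (-(7:ℝ)/4) ∧
      |deriv Ai (-x) - Real.pi ^ (-(1:ℝ)/2) * x ^ ((1:ℝ)/4) *
          Real.sin ((2/3) * x ^ ((3:ℝ)/2) - Real.pi / 4)| ≤ 41 / 8 * x ^ (-(5:ℝ)/4) := by
  obtain ⟨b, hb, rfl⟩ : ∃ b : ℝ, 0 < b ∧ x = b ^ 4 :=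
    ⟨x ^ ((1 : ℝ) / 4), Real.rpow_pos_of_pos hx _, by
      rw [← Real.rpow_natCast, ← Real.rpow_mul hx.le]; norm_num⟩
  have hpos (r : ℝ) (k : ℕ) (hr : 4 * r = k) : (b ^ 4) ^ r = b ^ k := by
    rw [pow_four_rpow hb.le, hr, Real.rpow_natCast]
  have hneg (r : ℝ) (k : ℕ) (hr : 4 * r = -k) : (b ^ 4) ^ r = (b ^ k)⁻¹ := by
    rw [pow_four_rpow hb.le, hr, Real.rpow_neg hb.le, Real.rpow_natCast]
  have hpi : Real.pi ^ (-(1 : ℝ) / 2) = 1 / √Real.pi := by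
    rw [neg_div, Real.rpow_neg Real.pi_pos.le, ← Real.sqrt_eq_rpow, one_div]
  rw [hpos (1 / 4) 1 (by norm_num), hpos (3 / 2) 6 (by norm_num), hneg (-1 / 4) 1 (by norm_num),
    hneg (-3 / 2) 6 (by norm_num), hneg (-7 / 4) 7 (by norm_num), hneg (-5 / 4) 5 (by norm_num),
    hpi, pow_one]
  exact ⟨abs_Ai_pow_four_sub_one_le hb, abs_deriv_Ai_pow_four_add_one_le hb,
    abs_Ai_neg_pow_four_sub_le hb, abs_deriv_Ai_neg_pow_four_sub_le hb⟩

/-- classical Plancherel–Rotach type asymptotics for the Airy function and its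
derivative, with explicit error bounds for `x ≥ 1`. -/
theorem airy_asymptotics :
    ∃ C : ℝ, 0 < C ∧ ∀ x : ℝ, 1 ≤ x →
      |2 * Real.sqrt Real.pi * x ^ ((1:ℝ)/4) * Real.exp ((2/3) * x ^ ((3:ℝ)/2)) * Ai x - 1|
          ≤ C * x ^ (-(3:ℝ)/2) ∧
      |2 * Real.sqrt Real.pi * x ^ (-(1:ℝ)/4) * Real.exp ((2/3) * x ^ ((3:ℝ)/2)) * deriv Ai x + 1|
          ≤ C * x ^ (-(3:ℝ)/2) ∧
      |Ai (-x) - Real.pi ^ (-(1:ℝ)/2) * x ^ (-(1:ℝ)/4) *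
          Real.cos ((2/3) * x ^ ((3:ℝ)/2) - Real.pi / 4)| ≤ C * x ^ (-(7:ℝ)/4) ∧
      |deriv Ai (-x) - Real.pi ^ (-(1:ℝ)/2) * x ^ ((1:ℝ)/4) *
          Real.sin ((2/3) * x ^ ((3:ℝ)/2) - Real.pi / 4)| ≤ C * x ^ (-(5:ℝ)/4) := by
  refine ⟨41 / 8, by norm_num, fun x hx => ?_⟩
  obtain ⟨hAi, hAi', hAi_neg, hAi_neg'⟩ := airy_asymptotics_general (zero_lt_one.trans_le hx)
  exact ⟨hAi.trans (by gcongr; norm_num), hAi'.trans (by gcongr; norm_num),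
    hAi_neg.trans (by gcongr; norm_num), hAi_neg'⟩
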